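/- (Gowers' FIN_{±k} theorem.) For every k, r ∈ ℕ with k, r ≥ 1 and every colouring c : FIN_{±k} → {0, …, r−1} there exist i < r and an infinite block sequence P = (p_n)_{n<ω} in FIN_{±k} such that ⟨P⟩_{±k} ⊆ (c⁻¹{i})₁. -/

import Mathlib

open Function Set

/-- `p` is an element of `FIN_{±k}`: finitely supported, values in `{0, ±1, …, ±k}`,
attaining one of the values `±k`. -/
def IsFin (k : ℕ) (p : ℕ → ℤ) : Prop :=
  (Function.support p).Finite ∧ (∀ n, |p n| ≤ (k : ℤ)) ∧ (∃ n, |p n| = (k : ℤ))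

/-- `p < q` in the block ordering: every point of `supp p` precedes every point of `supp q`. -/
def BlockLt (p q : ℕ → ℤ) : Prop :=
  ∀ m n : ℕ, p m ≠ 0 → q n ≠ 0 → m < n

/-- The tetris operation `T`. -/
def tetris (p : ℕ → ℤ) : ℕ → ℤ := fun n =>
  if 0 < p n then p n - 1 else if p n < 0 then p n + 1 else 0

/-- The sign-flipped tetris operation `-T`. -/
def negT (p : ℕ → ℤ) : ℕ → ℤ := -(tetris p)

/-- The weak tetris operation `S`. -/
def Sop (p : ℕ → ℤ) : ℕ → ℤ := fun n => if |p n| = 1 then 0 else p n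

/-- `‖p‖ ≤ c` for the `ℓ∞` norm. -/
def normLe (p : ℕ → ℤ) (c : ℕ) : Prop := ∀ n, |p n| ≤ (c : ℤ)

/-- `(A)_c`, the `c`-fattening of `A`. -/
def approx (c : ℕ) (A : Set (ℕ → ℤ)) : Set (ℕ → ℤ) :=
  {p | ∃ q ∈ A, normLe (p - q) c}

/-- `P` is an infinite block sequence in `FIN_{±k}`. -/
def IsBlockSeq (k : ℕ) (P : ℕ → ℕ → ℤ) : Prop :=
  (∀ n, IsFin k (P n)) ∧ ∀ m n : ℕ, m < n → BlockLt (P m) (P n)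

/-- `t` is a finite block sequence in `FIN_{±k}` (coded as a list). -/
def IsFinBlockSeq (k : ℕ) (t : List (ℕ → ℤ)) : Prop :=
  (∀ p ∈ t, IsFin k p) ∧ t.Pairwise BlockLt

/-- `q ∈ ⟨P⟩_{±k}`: `q = ε₀T^{j₀}(p_{n₀}) + ⋯ + ε_m T^{j_m}(p_{n_m})` with `n₀ < ⋯ < n_m`,
`εᵢ ∈ {±1}`, `jᵢ < k` and `min jᵢ = 0`. -/
def InSpanPM (k : ℕ) (P : ℕ → ℕ → ℤ) (q : ℕ → ℤ) : Prop :=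
  ∃ (m : ℕ) (n : Fin (m + 1) → ℕ) (ε : Fin (m + 1) → ℤ) (j : Fin (m + 1) → ℕ),
    StrictMono n ∧ (∀ i, ε i = 1 ∨ ε i = -1) ∧ (∀ i, j i < k) ∧ (∃ i, j i = 0) ∧
    q = ∑ i, ε i • tetris^[j i] (P (n i))

/-- `q ∈ ⟨P⟩_{(−T)}`. -/
def InSpanNegT (k : ℕ) (P : ℕ → ℕ → ℤ) (q : ℕ → ℤ) : Prop :=
  ∃ (m : ℕ) (n : Fin (m + 1) → ℕ) (j : Fin (m + 1) → ℕ),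
    StrictMono n ∧ (∀ i, j i < k) ∧ (∃ i, j i = 0) ∧
    q = ∑ i, negT^[j i] (P (n i))

/-- `q ∈ ⟨p_a, …, p_b⟩_{(−T)}`. -/
def InSpanNegTRange (k : ℕ) (P : ℕ → ℕ → ℤ) (a b : ℕ) (q : ℕ → ℤ) : Prop :=
  ∃ (m : ℕ) (n : Fin (m + 1) → ℕ) (j : Fin (m + 1) → ℕ),
    StrictMono n ∧ (∀ i, a ≤ n i ∧ n i ≤ b) ∧ (∀ i, j i < k) ∧ (∃ i, j i = 0) ∧
    q = ∑ i, negT^[j i] (P (n i))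

/-- A cofinite ultrafilter on `FIN_{±k}` (coded as an ultrafilter on `ℕ → ℤ`
concentrating on `FIN_{±k}`). -/
def IsCofiniteUF (k : ℕ) (𝒰 : Ultrafilter (ℕ → ℤ)) : Prop :=
  {p | IsFin k p} ∈ 𝒰 ∧ ∀ m : ℕ, {p : ℕ → ℤ | ∀ n < m, p n = 0} ∈ 𝒰

/-- `A ∈ 𝒰 + 𝒱`. -/
def SumMem (𝒰 𝒱 : Ultrafilter (ℕ → ℤ)) (A : Set (ℕ → ℤ)) : Prop :=
  {p | {q | BlockLt p q ∧ p + q ∈ A} ∈ 𝒱} ∈ 𝒰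

/-- `𝒰` is subsymmetric: `A ∈ 𝒰` implies `−(A)₁ ∈ 𝒰`. -/
def IsSubsymmetric (𝒰 : Ultrafilter (ℕ → ℤ)) : Prop :=
  ∀ A ∈ 𝒰, {p : ℕ → ℤ | -p ∈ approx 1 A} ∈ 𝒰

/-- `𝒰 + (−T)^j 𝒰 = (−T)^j 𝒰 + 𝒰 = 𝒰` for all `j ≤ k`. -/
def IsIdempotentUF (k : ℕ) (𝒰 : Ultrafilter (ℕ → ℤ)) : Prop :=
  ∀ j ≤ k, ∀ A : Set (ℕ → ℤ),
    (SumMem 𝒰 (Ultrafilter.map (negT^[j]) 𝒰) A ↔ A ∈ 𝒰) ∧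
    (SumMem (Ultrafilter.map (negT^[j]) 𝒰) 𝒰 A ↔ A ∈ 𝒰)

/-- A cofinite subsymmetric ultrafilter on `FIN_{±k}` idempotent with respect to
all the maps `(−T)^j`, `j ≤ k`. -/
def IsGowersUF (k : ℕ) (𝒰 : Ultrafilter (ℕ → ℤ)) : Prop :=
  IsCofiniteUF k 𝒰 ∧ IsSubsymmetric 𝒰 ∧ IsIdempotentUF k 𝒰

/-- A `𝒰`-tree on `FIN_{±k}` with stem `s`. -/
structure IsUTree (k : ℕ) (𝒰 : Ultrafilter (ℕ → ℤ)) (U : Set (List (ℕ → ℤ)))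
    (s : List (ℕ → ℤ)) : Prop where
  blocks : ∀ t ∈ U, IsFinBlockSeq k t
  prefixClosed : ∀ t ∈ U, ∀ t' : List (ℕ → ℤ), t' <+: t → t' ∈ U
  stemMem : s ∈ U
  stemComparable : ∀ t ∈ U, s <+: t ∨ t <+: s
  branch : ∀ t ∈ U, s <+: t → {p | t ++ [p] ∈ U} ∈ 𝒰

/-- `[U]`, the set of infinite branches of a tree of finite block sequences. -/
def Branches (U : Set (List (ℕ → ℤ))) : Set (ℕ → ℕ → ℤ) :=
  {P | ∀ n : ℕ, (List.ofFn fun i : Fin n => P i.1) ∈ U}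

/-- The space `FIN_{±k}^[∞]` of infinite block sequences. -/
def BlockSeq (k : ℕ) : Type := {P : ℕ → ℕ → ℤ // IsBlockSeq k P}

/-- The metrizable topology on `FIN_{±k}^[∞]`, generated by the basic sets `[s]`. -/
instance BlockSeq.topology (k : ℕ) : TopologicalSpace (BlockSeq k) :=
  TopologicalSpace.generateFrom
    {O | ∃ s : List (ℕ → ℤ),
      O = {P : BlockSeq k | ∀ i : Fin s.length, P.1 i.1 = s.get i}}

/-- The Souslin operation applied to a Souslin scheme. -/
def SouslinOp {α : Type*} (F : List ℕ → Set α) : Set α :=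
  ⋃ x : ℕ → ℕ, ⋂ n : ℕ, F (List.ofFn fun i : Fin n => x i.1)

/-- `A` is Souslin measurable: it belongs to every field of sets containing the open
sets and closed under the Souslin operation. -/
def SouslinMeasurable {α : Type*} [TopologicalSpace α] (A : Set α) : Prop :=
  ∀ 𝓕 : Set (Set α),
    (∀ O : Set α, IsOpen O → O ∈ 𝓕) →
    (∀ B ∈ 𝓕, Bᶜ ∈ 𝓕) →
    (∀ B ∈ 𝓕, ∀ C ∈ 𝓕, B ∪ C ∈ 𝓕) →
    (∀ F : List ℕ → Set α, (∀ s, F s ∈ 𝓕) → SouslinOp F ∈ 𝓕) →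
    A ∈ 𝓕

/-- The map `Φ_m : FIN_{±2m} → FIN_{±m}` (its defining formula does not depend on `m`). -/
def Phi (p : ℕ → ℤ) : ℕ → ℤ := fun n =>
  if p n % 2 = 0 then p n / 2
  else if 0 < p n then (p n - 1) / 2
  else (p n + 1) / 2

/-- `Ψ = Φ_k ∘ Φ_{2k} : FIN_{±4k} → FIN_{±k}`. -/
def Psi (p : ℕ → ℤ) : ℕ → ℤ := Phi (Phi p)

/-!
Let `U` be a cofinite ultrafilter on `FIN_{±k}` such that `-U` is within distance `1` of `U` and
`T^i U + T^j U = T^(min i j) U` for all `i`, `j`, and let `A ∈ U`. Choose the blocks `p₀ < p₁ < ⋯`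
one after the other, each generic for `U`. The equations for `U` keep all sums of the `T^j pᵢ` with
least exponent `0` in `A`. A sign costs an error of at most `1` on the support of its block only;
errors on different blocks do not accumulate, so the signed sums stay within distance `1` of `A`.

To obtain `U`, note that the subsymmetric cofinite ultrafilters on `FIN_{±0}, FIN_{±1}, …` form
compact semigroups, mapped down by `T`. Once an idempotent `e` has been found at one level, Ellis's
theorem in the semigroup of its preimages under `T` gives an idempotent `u` one level up with
`T u = e` and `u + e = e + u = u`. At level `k` all the equations hold.
-/

open Filter

section General

variable {α : Type*}

theorem iterate_tsub {f : α → α} {P : ℕ → α → Prop} (hf : ∀ j x, P j x → P (j - 1) (f x))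
    {k : ℕ} {x : α} (hx : P k x) : ∀ n, P (k - n) (f^[n] x)
  | 0 => hx
  | n + 1 => by
    rw [iterate_succ_apply', ← Nat.sub_sub]
    exact hf _ _ (iterate_tsub hf hx n)

theorem exists_seq_of_forall_exists_snoc {P : ∀ n, (Fin n → α) → Prop} (h₀ : P 0 Fin.elim0)
    (hsnoc : ∀ n s, P n s → ∃ a, P (n + 1) (Fin.snoc s a)) :
    ∃ f : ℕ → α, ∀ n, P n fun i => f i := by
  choose next hnext using hsnoc
  let prefixes : ∀ n, {s : Fin n → α // P n s} :=
    Nat.rec ⟨Fin.elim0, h₀⟩ fun n s => ⟨Fin.snoc s.1 (next n s.1 s.2), hnext n s.1 s.2⟩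
  let f n := next n (prefixes n).1 (prefixes n).2
  have prefixes_eq : ∀ n, (prefixes n).1 = fun i : Fin n => f i := by
    intro n
    induction n with
    | zero => exact Subsingleton.elim _ _
    | succ n ih =>
      change Fin.snoc (α := fun _ => α) (prefixes n).1 (f n) = _
      rw [ih]
      exact funext (Fin.lastCases (by simp) (by simp))
  exact ⟨f, fun n => prefixes_eq n ▸ (prefixes n).2⟩

theorem inf_univ_castSucc [SemilatticeInf α] [OrderTop α] {n : ℕ} (j : Fin (n + 1) → α) :
    Finset.univ.inf j = (Finset.univ.inf fun i : Fin n => j i.castSucc) ⊓ j (Fin.last n) := by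
  rw [Fin.univ_castSuccEmb, Finset.inf_cons, Finset.inf_map, inf_comm]
  rfl

end General

/-! ### Idempotents in graded compact semigroups -/

section GradedSemigroup

variable {X : Type*}

/-- For layers `M 0, M 1, …` and a map `f` sending each layer to the one below: the elements of
`M j` that lift to `M k` along `f`. Unlike the layers, these sets are mapped *onto* one another. -/
def liftable (M : ℕ → Set X) (f : X → X) (k j : ℕ) : Set X :=
  f^[k - j] '' M k

theorem exists_mem_liftable_succ {M : ℕ → Set X} {f : X → X} {k j : ℕ} (hj : j < k) {x : X}
    (hx : x ∈ liftable M f k j) :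
    ∃ y ∈ liftable M f k (j + 1), f y = x := by
  obtain ⟨x, hx, rfl⟩ := hx
  refine ⟨f^[k - (j + 1)] x, mem_image_of_mem _ hx, ?_⟩
  rw [← iterate_succ_apply' f, show (k - (j + 1)).succ = k - j by omega]

variable [AddSemigroup X]

theorem iterate_add_iterate_of_lift {f : X → X} {e u : X}
    (he : ∀ i j, f^[i] e + f^[j] e = f^[min i j] e) (hfu : f u = e) (huu : u + u = u)
    (hue : u + e = u) (heu : e + u = u) (i j : ℕ) :
    f^[i] u + f^[j] u = f^[min i j] u := by
  rcases i with _ | i <;> rcases j with _ | j <;>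
    simp only [iterate_succ_apply, hfu, Nat.zero_min, Nat.min_zero, iterate_zero_apply,
      Nat.succ_min_succ, he]
  · exact huu
  · calc u + f^[j] e = u + (e + f^[j] e) := by rw [← add_assoc, hue]
      _ = u := by simpa [hue] using congrArg (u + ·) (he 0 j)
  · calc f^[i] e + u = f^[i] e + e + u := by rw [add_assoc, heu]
      _ = u := by simpa [heu] using congrArg (· + u) (he i 0)

variable [TopologicalSpace X]

theorem exists_idempotent_absorbing_of_isCompact [T2Space X]
    (hcont : ∀ r : X, Continuous (· + r)) {S : Set X} (hS : IsCompact S) (hne : S.Nonempty)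
    (hadd : ∀ x ∈ S, ∀ y ∈ S, x + y ∈ S) {e : X} (he : e + e = e)
    (hleft : ∀ x ∈ S, e + x ∈ S) (hright : ∀ x ∈ S, x + e ∈ S) :
    ∃ u ∈ S, u + u = u ∧ u + e = u ∧ e + u = u := by
  obtain ⟨_, ⟨v, hv, rfl⟩, hidem⟩ := exists_idempotent_in_compact_add_subsemigroup hcont
    ((· + e) '' S) (hne.image _) (hS.image (hcont e)) (by
      rintro _ ⟨x, hx, rfl⟩ _ ⟨y, hy, rfl⟩
      exact ⟨x + e + y, hadd _ (hright x hx) y hy, by simp only [add_assoc]⟩)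
  have hve : v + e + e = v + e := by rw [add_assoc, he]
  refine ⟨e + (v + e), hleft _ (hright v hv), ?_, by rw [add_assoc, hve], by rw [← add_assoc, he]⟩
  calc e + (v + e) + (e + (v + e)) = e + (v + e + e + (v + e)) := by simp only [add_assoc]
    _ = e + (v + e) := by rw [hve, hidem]

/-- Closed layers `M 0, M 1, …` of a semigroup and a map `f` lowering the layer by one (and keeping
`M 0`, since `0 - 1 = 0`), abstracted from the subsymmetric ultrafilters on `FIN_{±j}` with the
tetris operation. -/
structure IsGradedSemigroup (M : ℕ → Set X) (f : X → X) : Prop where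
  isClosed : ∀ j, IsClosed (M j)
  continuous : Continuous f
  add_mem : ∀ {i j x y}, x ∈ M i → y ∈ M j → x + y ∈ M (max i j)
  map_mem : ∀ j, ∀ x ∈ M j, f x ∈ M (j - 1)
  map_add : ∀ {i j x y}, x ∈ M i → y ∈ M j → f (x + y) = f x + f y
  subsingleton_zero : (M 0).Subsingleton

namespace IsGradedSemigroup

variable {M : ℕ → Set X} {f : X → X} (hM : IsGradedSemigroup M f)
include hM

theorem iterate_mem {k : ℕ} {x : X} (hx : x ∈ M k) (n : ℕ) : f^[n] x ∈ M (k - n) :=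
  iterate_tsub (P := fun j x => x ∈ M j) hM.map_mem hx n

theorem iterate_add {i j : ℕ} {x y : X} (hx : x ∈ M i) (hy : y ∈ M j) (n : ℕ) :
    f^[n] (x + y) = f^[n] x + f^[n] y := by
  induction n with
  | zero => rfl
  | succ n ih =>
    simp only [iterate_succ_apply', ih, hM.map_add (hM.iterate_mem hx n) (hM.iterate_mem hy n)]

theorem mem_of_liftable {k j : ℕ} (hj : j ≤ k) {x : X} (hx : x ∈ liftable M f k j) : x ∈ M j := by
  obtain ⟨x, hx, rfl⟩ := hx
  simpa only [Nat.sub_sub_self hj] using hM.iterate_mem hx (k - j)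

theorem add_mem_liftable {k i j : ℕ} (hi : i ≤ k) (hj : j ≤ k) {x y : X}
    (hx : x ∈ liftable M f k i) (hy : y ∈ liftable M f k j) :
    x + y ∈ liftable M f k (max i j) := by
  obtain ⟨x, hx, rfl⟩ := hx
  obtain ⟨y, hy, rfl⟩ := hy
  have hx' := hM.iterate_mem hx (max i j - i)
  have hy' := hM.iterate_mem hy (max i j - j)
  refine ⟨f^[max i j - i] x + f^[max i j - j] y, ?_, ?_⟩
  · convert hM.add_mem hx' hy' using 2
    omega
  · rw [hM.iterate_add hx' hy', ← iterate_add_apply, ← iterate_add_apply]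
    congr 3 <;> omega

theorem exists_idempotent_lift [CompactSpace X] [T2Space X] (hcont : ∀ r : X, Continuous (· + r))
    {k j : ℕ} (hj : j < k) {e : X} (he : e ∈ liftable M f k j) (hee : e + e = e)
    (hefe : e + f e = e) (hfee : f e + e = e) :
    ∃ u ∈ liftable M f k (j + 1), f u = e ∧ u + u = u ∧ u + e = u ∧ e + u = u := by
  have heM := hM.mem_of_liftable hj.le he
  have mem {x : X} (hx : x ∈ liftable M f k (j + 1)) := hM.mem_of_liftable hj hx
  obtain ⟨v, hv, hve⟩ := exists_mem_liftable_succ hj he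
  obtain ⟨u, ⟨hu, hue⟩, huu⟩ := exists_idempotent_absorbing_of_isCompact hcont
    (S := liftable M f k (j + 1) ∩ f ⁻¹' {e})
    ((((hM.isClosed k).isCompact.image (hM.continuous.iterate _)).isClosed.inter
      (isClosed_singleton.preimage hM.continuous)).isCompact)
    ⟨v, hv, hve⟩
    (by
      rintro x ⟨hx, hxe : f x = e⟩ y ⟨hy, hye : f y = e⟩
      refine ⟨by simpa using hM.add_mem_liftable hj hj hx hy, ?_⟩
      rw [mem_preimage, hM.map_add (mem hx) (mem hy), hxe, hye, hee, mem_singleton_iff])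
    hee
    (by
      rintro x ⟨hx, hxe : f x = e⟩
      refine ⟨by simpa using hM.add_mem_liftable hj.le hj he hx, ?_⟩
      rw [mem_preimage, hM.map_add heM (mem hx), hxe, hfee, mem_singleton_iff])
    (by
      rintro x ⟨hx, hxe : f x = e⟩
      refine ⟨by simpa using hM.add_mem_liftable hj hj.le hx he, ?_⟩
      rw [mem_preimage, hM.map_add (mem hx) heM, hxe, hefe, mem_singleton_iff])
  exact ⟨u, hu, hue, huu⟩

theorem exists_iterate_add_iterate [CompactSpace X] [T2Space X]
    (hcont : ∀ r : X, Continuous (· + r)) {k : ℕ} (hne : (M k).Nonempty) :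
    ∃ e ∈ M k, ∀ i j, f^[i] e + f^[j] e = f^[min i j] e := by
  suffices h : ∀ n ≤ k, ∃ e ∈ liftable M f k n, ∀ i j, f^[i] e + f^[j] e = f^[min i j] e by
    obtain ⟨e, he, hidem⟩ := h k le_rfl
    exact ⟨e, hM.mem_of_liftable le_rfl he, hidem⟩
  intro n hn
  induction n with
  | zero =>
    obtain ⟨x, hx⟩ := hne
    have he : f^[k] x ∈ liftable M f k 0 := mem_image_of_mem _ hx
    have he₀ := hM.mem_of_liftable k.zero_le he
    have hfix : ∀ i, f^[i] (f^[k] x) = f^[k] x :=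
      iterate_fixed (hM.subsingleton_zero (hM.map_mem 0 _ he₀) he₀)
    exact ⟨_, he, fun i j => by
      simpa only [hfix] using hM.subsingleton_zero (hM.add_mem he₀ he₀) he₀⟩
  | succ n ih =>
    obtain ⟨e, he, hidem⟩ := ih (Nat.le_of_succ_le hn)
    obtain ⟨u, hu, hfu, huu, hue, heu⟩ := hM.exists_idempotent_lift hcont hn he
      (hidem 0 0) (hidem 0 1) (hidem 1 0)
    exact ⟨u, hu, iterate_add_iterate_of_lift hidem hfu huu hue heu⟩

end IsGradedSemigroup

end GradedSemigroup

/-! ### The tetris operation -/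

section Tetris

variable {p q : ℕ → ℤ} {i j k c : ℕ}

theorem tetris_apply_eq_zero {n : ℕ} (h : p n = 0) : tetris p n = 0 := by
  simp [tetris, h]

theorem abs_tetris_apply (p : ℕ → ℤ) (n : ℕ) : |tetris p n| = max (|p n| - 1) 0 := by
  grind [tetris]

theorem tetris_neg (p : ℕ → ℤ) : tetris (-p) = -tetris p := by
  ext n
  grind [tetris, Pi.neg_apply]

theorem normLe_sub_tetris (p : ℕ → ℤ) : normLe (p - tetris p) 1 := by
  intro n
  grind [tetris, Pi.sub_apply]

theorem normLe.tetris_sub_tetris (h : normLe (p - q) c) : normLe (tetris p - tetris q) c := by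
  intro n
  have := h n
  grind [tetris, Pi.sub_apply]

theorem normLe.neg (h : normLe p c) : normLe (-p) c := by
  simpa only [normLe, Pi.neg_apply, abs_neg] using h

theorem IsFin.eq_zero (h : IsFin 0 p) : p = 0 :=
  funext fun n => by simpa using h.2.1 n

theorem IsFin.neg (h : IsFin k p) : IsFin k (-p) := by
  simpa only [IsFin, support_neg, Pi.neg_apply, abs_neg] using h

theorem isFin_tetris (h : IsFin k p) : IsFin (k - 1) (tetris p) := by
  obtain ⟨hfin, hle, n, hn⟩ := h
  refine ⟨hfin.subset fun m => mt tetris_apply_eq_zero, fun m => ?_, n, ?_⟩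
  · have := hle m
    rw [abs_tetris_apply]
    omega
  · rw [abs_tetris_apply]
    omega

theorem isFin_negT (h : IsFin k p) : IsFin (k - 1) (negT p) :=
  (isFin_tetris h).neg

theorem iterate_tetris_eq_zero (h : IsFin k p) : tetris^[k] p = 0 := by
  have := iterate_tsub (P := IsFin) (fun _ _ => isFin_tetris) h k
  rw [Nat.sub_self] at this
  exact this.eq_zero

theorem support_iterate_tetris_subset (p : ℕ → ℤ) : ∀ j, support (tetris^[j] p) ⊆ support p
  | 0 => Subset.rfl
  | j + 1 => by
    rw [iterate_succ_apply']
    exact Subset.trans (fun n => mt tetris_apply_eq_zero) (support_iterate_tetris_subset p j)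

theorem isFin_single (k n : ℕ) : IsFin k (Pi.single n (k : ℤ)) := by
  refine ⟨(finite_singleton n).subset Pi.support_single_subset, fun m => ?_, n, by simp⟩
  rcases eq_or_ne m n with rfl | h <;> simp [*]

theorem BlockLt.eq_zero_or_eq_zero (h : BlockLt p q) (n : ℕ) : p n = 0 ∨ q n = 0 := by
  by_contra! hn
  exact (h n n hn.1 hn.2).false

theorem BlockLt.sub_right {q' : ℕ → ℤ} (h : BlockLt p q) (h' : BlockLt p q') :
    BlockLt p (q - q') := by
  intro m n hm hn
  by_contra hmn
  exact hn (by simp [not_imp_comm.1 (h m n hm) hmn, not_imp_comm.1 (h' m n hm) hmn])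

theorem BlockLt.tetris_add (h : BlockLt p q) : tetris (p + q) = tetris p + tetris q := by
  ext n
  rcases h.eq_zero_or_eq_zero n with hn | hn <;> simp [tetris, hn]

theorem BlockLt.isFin_add (h : BlockLt p q) (hp : IsFin i p) (hq : IsFin j q) :
    IsFin (max i j) (p + q) := by
  obtain ⟨hpfin, hple, m, hm⟩ := hp
  obtain ⟨hqfin, hqle, n, hn⟩ := hq
  refine ⟨(hpfin.union hqfin).subset (support_add _ _), fun l => ?_, ?_⟩
  · grind [h.eq_zero_or_eq_zero l, Pi.add_apply]
  · rcases le_total j i with hij | hij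
    · exact ⟨m, by grind [h.eq_zero_or_eq_zero m, Pi.add_apply]⟩
    · exact ⟨n, by grind [h.eq_zero_or_eq_zero n, Pi.add_apply]⟩

theorem BlockLt.normLe_add (h : BlockLt p q) (hp : normLe p c) (hq : normLe q c) :
    normLe (p + q) c := by
  intro n
  rcases h.eq_zero_or_eq_zero n with hn | hn
  · simpa [hn] using hq n
  · simpa [hn] using hp n

end Tetris

/-! ### Ultrafilters on an additive monoid -/

section Ultrafilter

/-- Ultrafilters on an additive monoid under the addition of `Ultrafilter.addSemigroup`, the neutral
element being the principal ultrafilter at `0`. -/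
@[reducible]
def ultrafilterAddMonoid (M : Type*) [AddMonoid M] : AddMonoid (Ultrafilter M) where
  __ := Ultrafilter.addSemigroup
  zero := pure 0
  zero_add U := Ultrafilter.coe_inj.mp <| Filter.ext' fun P =>
    (Ultrafilter.eventually_add (pure 0) U P).trans (by simp)
  add_zero U := Ultrafilter.coe_inj.mp <| Filter.ext' fun P =>
    (Ultrafilter.eventually_add U (pure 0) P).trans (by simp)
  nsmul := @nsmulRec _ ⟨pure 0⟩ _

attribute [local instance] ultrafilterAddMonoid

variable {α β M N : Type*}

theorem continuous_ultrafilterMap (f : α → β) : Continuous (Ultrafilter.map f) :=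
  ultrafilterBasis_is_basis.continuous_iff.2 <| forall_mem_range.2 fun s =>
    ultrafilter_isOpen_basic (f ⁻¹' s)

theorem iterate_ultrafilterMap (f : α → α) (U : Ultrafilter α) (n : ℕ) :
    (Ultrafilter.map f)^[n] U = U.map f^[n] := by
  induction n with
  | zero => rfl
  | succ n ih => rw [iterate_succ_apply', ih, Ultrafilter.map_map, iterate_succ']

theorem ultrafilterMap_add_of_eventually [AddMonoid M] [AddMonoid N] {f : M → N}
    {U V : Ultrafilter M} (h : ∀ᶠ x in U, ∀ᶠ y in V, f (x + y) = f x + f y) :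
    (U + V).map f = U.map f + V.map f := by
  refine Ultrafilter.coe_inj.mp <| Filter.ext' fun P => ?_
  change (∀ᶠ x in U, ∀ᶠ y in V, P (f (x + y))) ↔ ∀ᶠ x in U, ∀ᶠ y in V, P (f x + f y)
  exact eventually_congr <| h.mono fun _ hx => eventually_congr <| hx.mono fun _ hxy => by rw [hxy]

theorem ultrafilterMap_zero [AddMonoid M] [AddMonoid N] (f : M →+ N) :
    (0 : Ultrafilter M).map f = 0 := by
  change (pure 0 : Ultrafilter M).map f = pure 0
  rw [Ultrafilter.map_pure, map_zero]

theorem ultrafilterMap_add [AddMonoid M] [AddMonoid N] (f : M →+ N) (U V : Ultrafilter M) :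
    (U + V).map f = U.map f + V.map f :=
  ultrafilterMap_add_of_eventually (.of_forall fun _ => .of_forall fun _ => map_add f _ _)

end Ultrafilter

attribute [local instance] ultrafilterAddMonoid

/-! ### Cofinite ultrafilters -/

section Cofinite

variable {i j k : ℕ} {U V : Ultrafilter (ℕ → ℤ)}

theorem IsCofiniteUF.eventually_finite_support (hU : IsCofiniteUF k U) :
    ∀ᶠ p : ℕ → ℤ in U, (support p).Finite :=
  Filter.mem_of_superset hU.1 fun _ hp => hp.1

theorem IsCofiniteUF.eventually_blockLt (hU : IsCofiniteUF k U) {p : ℕ → ℤ}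
    (hp : (support p).Finite) : ∀ᶠ q in U, BlockLt p q := by
  obtain ⟨m, hm⟩ := hp.bddAbove
  filter_upwards [hU.2 (m + 1)] with q hq a b ha hb
  exact (hm ha).trans_lt (Nat.lt_of_succ_le (not_lt.1 (mt (hq b) hb)))

theorem IsCofiniteUF.map (hU : IsCofiniteUF i U) {f : (ℕ → ℤ) → ℕ → ℤ}
    (hf : ∀ p, IsFin i p → IsFin j (f p)) (hf₀ : ∀ p n, p n = 0 → f p n = 0) :
    IsCofiniteUF j (U.map f) :=
  ⟨Ultrafilter.mem_map.2 (Filter.mem_of_superset hU.1 hf), fun m => Ultrafilter.mem_map.2 <|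
    Filter.mem_of_superset (hU.2 m) fun p hp n hn => hf₀ p n (hp n hn)⟩

theorem IsCofiniteUF.map_tetris (hU : IsCofiniteUF k U) : IsCofiniteUF (k - 1) (U.map tetris) :=
  hU.map (fun _ => isFin_tetris) fun _ _ => tetris_apply_eq_zero

theorem IsCofiniteUF.map_negT (hU : IsCofiniteUF k U) : IsCofiniteUF (k - 1) (U.map negT) :=
  hU.map (fun _ => isFin_negT) fun _ _ hn => neg_eq_zero.2 (tetris_apply_eq_zero hn)

theorem IsCofiniteUF.map_iterate_tetris (hU : IsCofiniteUF k U) (j : ℕ) :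
    IsCofiniteUF (k - j) (U.map tetris^[j]) := by
  rw [← iterate_ultrafilterMap]
  exact iterate_tsub (fun _ _ => IsCofiniteUF.map_tetris) hU j

theorem IsCofiniteUF.add (hU : IsCofiniteUF i U) (hV : IsCofiniteUF j V) :
    IsCofiniteUF (max i j) (U + V) := by
  refine ⟨?_, fun m => ?_⟩
  · refine (Ultrafilter.eventually_add U V _).2 ?_
    filter_upwards [hU.1] with p hp
    filter_upwards [hV.1, hV.eventually_blockLt hp.1] with q hq hpq
    exact hpq.isFin_add hp hq
  · refine (Ultrafilter.eventually_add U V _).2 ?_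
    filter_upwards [hU.2 m] with p hp
    filter_upwards [hV.2 m] with q hq n hn
    rw [Pi.add_apply, hp n hn, hq n hn, add_zero]

theorem IsCofiniteUF.map_tetris_add (hU : IsCofiniteUF i U) (hV : IsCofiniteUF j V) :
    (U + V).map tetris = U.map tetris + V.map tetris := by
  apply ultrafilterMap_add_of_eventually
  filter_upwards [hU.eventually_finite_support] with p hp
  filter_upwards [hV.eventually_blockLt hp] with q hpq
  exact hpq.tetris_add

theorem IsCofiniteUF.eq_zero (hU : IsCofiniteUF 0 U) : U = 0 :=
  Ultrafilter.eq_of_le <| (le_pure_iff (a := (0 : ℕ → ℤ))).2 <|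
    Filter.mem_of_superset hU.1 fun _ => IsFin.eq_zero

theorem isCofiniteUF_zero : IsCofiniteUF 0 0 :=
  ⟨⟨by simp, by simp, 0, by simp⟩, fun _ _ _ => rfl⟩

theorem exists_isCofiniteUF (k : ℕ) : ∃ U, IsCofiniteUF k U := by
  refine ⟨(hyperfilter ℕ).map fun n => Pi.single n (k : ℤ), ?_, fun m => ?_⟩ <;>
    rw [Ultrafilter.mem_map]
  · exact Eventually.of_forall (isFin_single k)
  · filter_upwards [Nat.hyperfilter_le_atTop (eventually_ge_atTop m)] with n hmn l hl
    exact Pi.single_eq_of_ne (hl.trans_le hmn).ne _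

theorem isCofiniteUF_sum_range {W : ℕ → Ultrafilter (ℕ → ℤ)} {d : ℕ → ℕ}
    (h : ∀ n, IsCofiniteUF (d n) (W n)) (n : ℕ) :
    IsCofiniteUF ((Finset.range n).sup d) ((List.range n).map W).sum := by
  induction n with
  | zero => exact isCofiniteUF_zero
  | succ n ih =>
    rw [List.sum_range_succ, Finset.range_add_one, Finset.sup_insert, sup_comm]
    exact ih.add (h n)

theorem isClosed_setOf_isCofiniteUF (k : ℕ) : IsClosed {U | IsCofiniteUF k U} := by
  simp only [IsCofiniteUF, ofPred_and, ofPred_forall]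
  exact (ultrafilter_isClosed_basic _).inter (isClosed_iInter fun _ => ultrafilter_isClosed_basic _)

end Cofinite

/-! ### Subsymmetric ultrafilters -/

section Near

variable {c : ℕ} {U V U' V' : Ultrafilter (ℕ → ℤ)}

/-- The ultrafilter `U` is within distance `c` of `V`, in the sense that the `c`-fattening of every
set in `V` belongs to `U`; `U` is subsymmetric if and only if `-U` is within distance `1` of `U`. -/
def IsNear (c : ℕ) (U V : Ultrafilter (ℕ → ℤ)) : Prop :=
  ∀ A ∈ V, approx c A ∈ U

theorem isNear_refl (c : ℕ) (U : Ultrafilter (ℕ → ℤ)) : IsNear c U U :=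
  fun _ hA => Filter.mem_of_superset hA fun p hp => ⟨p, hp, by simp [normLe]⟩

theorem isNear_pure {p q : ℕ → ℤ} (h : normLe (p - q) c) : IsNear c (pure p) (pure q) :=
  fun _ hq => ⟨q, hq, h⟩

theorem isNear_map {f g : (ℕ → ℤ) → ℕ → ℤ} (h : ∀ p, normLe (f p - g p) c)
    (U : Ultrafilter (ℕ → ℤ)) : IsNear c (U.map f) (U.map g) :=
  fun _ hA => Ultrafilter.mem_map.2 <|
    Filter.mem_of_superset (Ultrafilter.mem_map.1 hA) fun p hp => ⟨g p, hp, h p⟩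

theorem IsNear.map_tetris (h : IsNear c U V) : IsNear c (U.map tetris) (V.map tetris) :=
  fun A hA => Ultrafilter.mem_map.2 <|
    Filter.mem_of_superset (h (tetris ⁻¹' A) (Ultrafilter.mem_map.1 hA)) fun _ ⟨q, hq, hpq⟩ =>
      ⟨tetris q, hq, hpq.tetris_sub_tetris⟩

theorem IsNear.add {i j : ℕ} (h : IsNear c U V) (h' : IsNear c U' V')
    (hU : ∀ᶠ p : ℕ → ℤ in U, (support p).Finite) (hV : ∀ᶠ p : ℕ → ℤ in V, (support p).Finite)
    (hU' : IsCofiniteUF i U') (hV' : IsCofiniteUF j V') : IsNear c (U + U') (V + V') := by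
  intro A hA
  refine (Ultrafilter.eventually_add U U' _).2 ?_
  filter_upwards [h _ (((Ultrafilter.eventually_add V V' _).1 hA).and hV), hU]
    with p ⟨q, ⟨hqA, hq⟩, hpq⟩ hp
  have hfin : (support (p - q)).Finite := (hp.union hq).subset (support_sub p q)
  filter_upwards [h' _ (hqA.and (hV'.eventually_blockLt hfin)), hU'.eventually_blockLt hfin]
    with p' ⟨q', ⟨hq'A, hq'⟩, hpq'⟩ hp'
  refine ⟨q + q', hq'A, ?_⟩
  rw [add_sub_add_comm]
  exact (hp'.sub_right hq').normLe_add hpq hpq'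

end Near

section Subsymmetric

variable {c i j k : ℕ} {U V : Ultrafilter (ℕ → ℤ)}

theorem isSubsymmetric_iff_isNear : IsSubsymmetric U ↔ IsNear 1 (U.map Neg.neg) U :=
  Iff.rfl

theorem IsCofiniteUF.map_neg (hU : IsCofiniteUF k U) : IsCofiniteUF k (U.map Neg.neg) :=
  hU.map (fun _ => IsFin.neg) fun _ _ => neg_eq_zero.2

theorem isNear_map_neg_add {U' V' : Ultrafilter (ℕ → ℤ)} {i' j' : ℕ} (hU : IsCofiniteUF i U)
    (hV : IsCofiniteUF j V) (hU' : IsCofiniteUF i' U') (hV' : IsCofiniteUF j' V')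
    (h : IsNear c (U.map Neg.neg) V) (h' : IsNear c (U'.map Neg.neg) V') :
    IsNear c ((U + U').map Neg.neg) (V + V') := by
  rw [show (U + U').map Neg.neg = U.map Neg.neg + U'.map Neg.neg from
    ultrafilterMap_add negAddMonoidHom U U']
  exact h.add h' hU.map_neg.eventually_finite_support hV.eventually_finite_support hU'.map_neg hV'

theorem isNear_map_neg_sum_range {V W : ℕ → Ultrafilter (ℕ → ℤ)} {d e : ℕ → ℕ}
    (hV : ∀ n, IsCofiniteUF (d n) (V n)) (hW : ∀ n, IsCofiniteUF (e n) (W n))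
    (h : ∀ n, IsNear c ((V n).map Neg.neg) (W n)) (n : ℕ) :
    IsNear c (((List.range n).map V).sum.map Neg.neg) ((List.range n).map W).sum := by
  induction n with
  | zero =>
    rw [List.range_zero, List.map_nil, List.map_nil, List.sum_nil,
      show (0 : Ultrafilter (ℕ → ℤ)).map Neg.neg = 0 from ultrafilterMap_zero negAddMonoidHom]
    exact isNear_refl c 0
  | succ n ih =>
    rw [List.sum_range_succ, List.sum_range_succ]
    exact isNear_map_neg_add (isCofiniteUF_sum_range hV n) (isCofiniteUF_sum_range hW n)
      (hV n) (hW n) ih (h n)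

theorem IsSubsymmetric.map_tetris (hU : IsSubsymmetric U) : IsSubsymmetric (U.map tetris) := by
  have h := (isSubsymmetric_iff_isNear.1 hU).map_tetris
  rw [Ultrafilter.map_map, show tetris ∘ Neg.neg = Neg.neg ∘ tetris from funext tetris_neg,
    ← Ultrafilter.map_map] at h
  exact isSubsymmetric_iff_isNear.2 h

theorem IsSubsymmetric.map_iterate_tetris (hU : IsSubsymmetric U) (j : ℕ) :
    IsSubsymmetric (U.map tetris^[j]) := by
  rw [← iterate_ultrafilterMap]
  exact Iterate.rec IsSubsymmetric hU (fun _ => IsSubsymmetric.map_tetris) j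

theorem isClosed_setOf_isSubsymmetric : IsClosed {U | IsSubsymmetric U} := by
  simp only [IsSubsymmetric, ofPred_forall]
  exact isClosed_iInter fun A =>
    isClosed_imp (ultrafilter_isOpen_basic A) (ultrafilter_isClosed_basic _)

/-- The cofinite subsymmetric ultrafilters on `FIN_{±k}`. -/
def subsymmetricUF (k : ℕ) : Set (Ultrafilter (ℕ → ℤ)) :=
  {U | IsCofiniteUF k U ∧ IsSubsymmetric U}

theorem isGradedSemigroup_subsymmetricUF :
    IsGradedSemigroup subsymmetricUF (Ultrafilter.map tetris) where
  isClosed k := (isClosed_setOf_isCofiniteUF k).inter isClosed_setOf_isSubsymmetric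
  continuous := continuous_ultrafilterMap tetris
  add_mem hU hV := ⟨hU.1.add hV.1, isNear_map_neg_add hU.1 hU.1 hV.1 hV.1 hU.2 hV.2⟩
  map_mem _ _ hU := ⟨hU.1.map_tetris, hU.2.map_tetris⟩
  map_add hU hV := hU.1.map_tetris_add hV.1
  subsingleton_zero _ hU _ hV := hU.1.eq_zero.trans hV.1.eq_zero.symm

theorem isNear_map_neg_iterate_negT (U : Ultrafilter (ℕ → ℤ)) {m n : ℕ}
    (h : n = m + 1 ∨ m = n + 1) :
    IsNear 1 (((Ultrafilter.map negT)^[m] U).map Neg.neg) ((Ultrafilter.map negT)^[n] U) := by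
  rcases h with rfl | rfl <;> rw [iterate_succ_apply']
  · refine isNear_map (fun p => ?_) _
    simpa only [negT, neg_sub_neg, neg_sub] using (normLe_sub_tetris p).neg
  · rw [Ultrafilter.map_map]
    nth_rw 2 [← Ultrafilter.map_id ((Ultrafilter.map negT)^[n] U)]
    exact isNear_map (fun p => by simpa [negT] using (normLe_sub_tetris p).neg) _

-- With `W n = (-T)^|n - k| U`, the palindromic sum `W 0 + ⋯ + W (2k)` climbs to `FIN_{±k}` and back
-- in steps of one. Since `W 0 = W (2k) = 0`, it is not changed by the shift `n ↦ n + 1`, whereas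
-- `-W n` is within distance `1` of `W (n + 1)`.
theorem subsymmetricUF_nonempty (k : ℕ) : (subsymmetricUF k).Nonempty := by
  obtain ⟨U, hU⟩ := exists_isCofiniteUF k
  let height (n : ℕ) := k - n.dist k
  let W (n : ℕ) := (Ultrafilter.map negT)^[n.dist k] U
  have hW (n : ℕ) : IsCofiniteUF (height n) (W n) :=
    iterate_tsub (fun _ _ => IsCofiniteUF.map_negT) hU (n.dist k)
  have hnear (n : ℕ) : IsNear 1 ((W n).map Neg.neg) (W (n + 1)) :=
    isNear_map_neg_iterate_negT U (by grind [Nat.dist])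
  have hzero : W 0 = 0 := IsCofiniteUF.eq_zero (by simpa [height, Nat.dist] using hW 0)
  have htop : W (2 * k) = 0 := IsCofiniteUF.eq_zero (by
    have := hW (2 * k)
    rwa [show height (2 * k) = 0 by simp only [height, Nat.dist]; omega] at this)
  refine ⟨((List.range (2 * k + 1)).map W).sum, ?_, isSubsymmetric_iff_isNear.2 ?_⟩
  · convert isCofiniteUF_sum_range hW (2 * k + 1)
    refine le_antisymm ?_ (Finset.sup_le fun n _ => Nat.sub_le k _)
    simpa [height] using Finset.le_sup (f := height) (Finset.mem_range.2 (by omega : k < 2 * k + 1))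
  · nth_rw 1 [List.sum_range_succ]
    rw [htop, add_zero, List.sum_range_succ', hzero, zero_add]
    exact isNear_map_neg_sum_range hW (fun n => hW (n + 1)) hnear (2 * k)

/-- The equations `T^i U + T^j U = T^(min i j) U`. They strengthen `U + T^j U = T^j U + U = U` to
all pairs of powers of `T`. -/
def IsTetrisIdempotent (U : Ultrafilter (ℕ → ℤ)) : Prop :=
  ∀ i j, U.map tetris^[i] + U.map tetris^[j] = U.map tetris^[min i j]

theorem exists_isTetrisIdempotent (k : ℕ) :
    ∃ U, IsCofiniteUF k U ∧ IsSubsymmetric U ∧ IsTetrisIdempotent U := by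
  obtain ⟨U, ⟨hcof, hsub⟩, hidem⟩ := isGradedSemigroup_subsymmetricUF.exists_iterate_add_iterate
    Ultrafilter.continuous_add_left (subsymmetricUF_nonempty k)
  exact ⟨U, hcof, hsub, fun i j => by simpa only [iterate_ultrafilterMap] using hidem i j⟩

end Subsymmetric

/-! ### Building the block sequence -/

section BlockSequence

variable {k n : ℕ} {U : Ultrafilter (ℕ → ℤ)} {A : Set (ℕ → ℤ)}

theorem IsFin.units_smul {p : ℕ → ℤ} (h : IsFin k p) (ε : ℤˣ) : IsFin k (ε • p) := by
  rcases Int.units_eq_one_or ε with rfl | rfl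
  · rwa [one_smul]
  · rw [Units.neg_smul, one_smul]
    exact h.neg

theorem IsSubsymmetric.isNear_map_units_smul (hU : IsSubsymmetric U) (ε : ℤˣ) :
    IsNear 1 (U.map (ε • ·)) U := by
  rcases Int.units_eq_one_or ε with rfl | rfl
  · rw [show ((1 : ℤˣ) • · : (ℕ → ℤ) → ℕ → ℤ) = id from funext (one_smul _), Ultrafilter.map_id]
    exact isNear_refl 1 U
  · rwa [show ((-1 : ℤˣ) • · : (ℕ → ℤ) → ℕ → ℤ) = Neg.neg from
      funext fun p => by rw [Units.neg_smul, one_smul]]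

/-- The finitely supported `q` such that, for every `j ≤ k` and `U`-almost all `x`, the sum
`q + T^j x` belongs to `T^(min l j) A`. A partial sum with least exponent `l` that is close to this
set can be continued to a sum close to `A`. -/
def extendable (U : Ultrafilter (ℕ → ℤ)) (A : Set (ℕ → ℤ)) (l : Fin (k + 1)) : Set (ℕ → ℤ) :=
  {q | (support q).Finite ∧
    ∀ j : Fin (k + 1), ∀ᶠ x in U, q + tetris^[j] x ∈ tetris^[(min l j : Fin (k + 1))] '' A}

theorem zero_mem_extendable_last (hA : A ∈ U) : 0 ∈ extendable U A (Fin.last k) := by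
  refine ⟨by simp, fun j => ?_⟩
  filter_upwards [hA] with x hx
  rw [min_eq_right j.le_last, zero_add]
  exact mem_image_of_mem _ hx

theorem extendable_zero_subset (hcof : IsCofiniteUF k U) :
    extendable U A (0 : Fin (k + 1)) ⊆ A := by
  rintro q ⟨-, hq⟩
  obtain ⟨x, hx, hxk⟩ := ((hq (Fin.last k)).and hcof.1).exists
  rwa [Fin.val_last, iterate_tetris_eq_zero hxk, add_zero, min_eq_left (Fin.zero_le _),
    Fin.val_zero, iterate_zero, image_id] at hx

theorem eventually_add_iterate_tetris_mem_extendable (hcof : IsCofiniteUF k U)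
    (hidem : IsTetrisIdempotent U) {l : Fin (k + 1)} {q : ℕ → ℤ} (hq : q ∈ extendable U A l)
    (j : Fin (k + 1)) : ∀ᶠ x in U, q + tetris^[j] x ∈ extendable U A (min l j) := by
  have hstep (j' : Fin (k + 1)) : ∀ᶠ x in U, ∀ᶠ x' in U,
      q + tetris^[j] x + tetris^[j'] x' ∈ tetris^[(min (min l j) j' : Fin (k + 1))] '' A := by
    have h : ∀ᶠ y in U.map tetris^[min (j : ℕ) j'],
        q + y ∈ tetris^[(min l (min j j') : Fin (k + 1))] '' A := hq.2 (min j j')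
    rw [← hidem, Ultrafilter.eventually_add, ← min_assoc] at h
    simpa only [Ultrafilter.coe_map, eventually_map, add_assoc] using h
  filter_upwards [eventually_all.2 hstep, hcof.eventually_finite_support] with x hx hfin
  exact ⟨(hq.1.union (hfin.subset (support_iterate_tetris_subset x j))).subset (support_add _ _),
    hx⟩

theorem eventually_add_smul_iterate_tetris_mem_approx (hcof : IsCofiniteUF k U)
    (hsub : IsSubsymmetric U) (hidem : IsTetrisIdempotent U) {l : Fin (k + 1)} {y : ℕ → ℤ}
    (hy : y ∈ approx 1 (extendable U A l)) (hyfin : (support y).Finite) (ε : ℤˣ)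
    (j : Fin (k + 1)) :
    ∀ᶠ x in U, y + ε • tetris^[j] x ∈ approx 1 (extendable U A (min l j)) := by
  obtain ⟨q, hq, hyq⟩ := hy
  have hcofj := hcof.map_iterate_tetris j
  have hnear : IsNear 1 (pure y + (U.map tetris^[j]).map (ε • ·)) (pure q + U.map tetris^[j]) :=
    (isNear_pure hyq).add ((hsub.map_iterate_tetris j).isNear_map_units_smul ε) hyfin hq.1
      (hcofj.map (fun _ hp => hp.units_smul ε) fun p n hn => by simp [hn]) hcofj
  exact hnear _ (eventually_add_iterate_tetris_mem_extendable hcof hidem hq j)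

/-- The sum `ε₀ T^{j₀} (s₀) + ⋯ + ε_{n-1} T^{j_{n-1}} (s_{n-1})`. Elements of `⟨P⟩_{±k}` are of this
form, all the blocks up to the last one being used, since `j = k` kills an unwanted block. -/
def signedSum (ε : Fin n → ℤˣ) (j : Fin n → Fin (k + 1)) (s : Fin n → ℕ → ℤ) : ℕ → ℤ :=
  ∑ i, ε i • tetris^[j i] (s i)

theorem signedSum_snoc (ε : Fin (n + 1) → ℤˣ) (j : Fin (n + 1) → Fin (k + 1)) (s : Fin n → ℕ → ℤ)
    (p : ℕ → ℤ) : signedSum ε j (Fin.snoc (α := fun _ => ℕ → ℤ) s p) =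
      signedSum (fun i => ε i.castSucc) (fun i => j i.castSucc) s +
        ε (Fin.last n) • tetris^[j (Fin.last n)] p := by
  simp only [signedSum, Fin.sum_univ_castSucc, Fin.snoc_castSucc, Fin.snoc_last]

theorem finite_support_signedSum {s : Fin n → ℕ → ℤ} (hs : ∀ i, (support (s i)).Finite)
    (ε : Fin n → ℤˣ) (j : Fin n → Fin (k + 1)) : (support (signedSum ε j s)).Finite :=
  Finset.sum_induction _ (fun p => (support p).Finite)
    (fun _ _ hp hq => (hp.union hq).subset (support_add _ _)) (by simp) fun i _ =>
    (hs i).subset <| (support_const_smul_subset _ _).trans (support_iterate_tetris_subset _ _)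

theorem exists_eq_signedSum_of_inSpanPM {P : ℕ → ℕ → ℤ} (hP : ∀ n, IsFin k (P n)) {q : ℕ → ℤ}
    (hq : InSpanPM k P q) :
    ∃ (N : ℕ) (ε : Fin N → ℤˣ) (j : Fin N → Fin (k + 1)),
      Finset.univ.inf j = 0 ∧ q = signedSum ε j fun i => P i := by
  obtain ⟨m, n, ε, j, hn, hε, hj, ⟨i₀, hi₀⟩, rfl⟩ := hq
  choose u hu using fun i => Int.isUnit_iff.2 (hε i)
  let e (i : Fin (m + 1)) : Fin (n (Fin.last m) + 1) :=
    ⟨n i, Nat.lt_succ_of_le (hn.monotone i.le_last)⟩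
  have he : Injective e := fun a b hab => hn.injective (Fin.mk.inj hab)
  let d (i : Fin (m + 1)) : Fin (k + 1) := ⟨j i, (hj i).trans k.lt_succ_self⟩
  refine ⟨_, extend e u 1, extend e d fun _ => Fin.last k, le_bot_iff.1 ?_, ?_⟩
  · refine (Finset.inf_le (Finset.mem_univ (e i₀))).trans_eq ?_
    rw [he.extend_apply]
    exact Fin.ext hi₀
  · refine Fintype.sum_of_injective e he _ _ (fun i hi => ?_) fun i => ?_
    · rw [extend_apply' d _ _ hi, Fin.val_last, iterate_tetris_eq_zero (hP i), smul_zero]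
    · rw [he.extend_apply, he.extend_apply, ← hu i]
      rfl

/-- The finite block sequences in `FIN_{±k}` all of whose signed sums with least exponent `l` are
close to `extendable U A l`. -/
structure IsGoodPrefix (k : ℕ) (U : Ultrafilter (ℕ → ℤ)) (A : Set (ℕ → ℤ)) (n : ℕ)
    (s : Fin n → ℕ → ℤ) : Prop where
  isFin : ∀ i, IsFin k (s i)
  blockLt : ∀ i i', i < i' → BlockLt (s i) (s i')
  signedSum_mem : ∀ (ε : Fin n → ℤˣ) (j : Fin n → Fin (k + 1)),
    signedSum ε j s ∈ approx 1 (extendable U A (Finset.univ.inf j))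

theorem isGoodPrefix_elim0 (hA : A ∈ U) : IsGoodPrefix k U A 0 Fin.elim0 where
  isFin i := i.elim0
  blockLt i := i.elim0
  signedSum_mem _ _ := ⟨0, zero_mem_extendable_last hA, by simp [signedSum, normLe]⟩

theorem IsGoodPrefix.eventually_snoc (hcof : IsCofiniteUF k U) (hsub : IsSubsymmetric U)
    (hidem : IsTetrisIdempotent U) {s : Fin n → ℕ → ℤ} (hs : IsGoodPrefix k U A n s) :
    ∀ᶠ p in U, IsGoodPrefix k U A (n + 1) (Fin.snoc s p) := by
  have hfin (i) : (support (s i)).Finite := (hs.isFin i).1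
  have hblock : ∀ᶠ p in U, ∀ i, BlockLt (s i) p :=
    eventually_all.2 fun i => hcof.eventually_blockLt (hfin i)
  have hsum : ∀ᶠ p in U, ∀ (ε : Fin (n + 1) → ℤˣ) (j : Fin (n + 1) → Fin (k + 1)),
      signedSum ε j (Fin.snoc s p) ∈ approx 1 (extendable U A (Finset.univ.inf j)) := by
    refine eventually_all.2 fun ε => eventually_all.2 fun j => ?_
    simp only [signedSum_snoc]
    rw [inf_univ_castSucc j]
    exact eventually_add_smul_iterate_tetris_mem_approx hcof hsub hidem (hs.signedSum_mem _ _)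
      (finite_support_signedSum hfin _ _) _ _
  filter_upwards [hcof.1, hblock, hsum] with p hp hsp hmem
  refine ⟨Fin.lastCases (by simpa) (by simpa using hs.isFin), fun i i' => ?_, hmem⟩
  induction i' using Fin.lastCases with
  | last =>
    induction i using Fin.lastCases with
    | last => exact fun h => absurd h (lt_irrefl _)
    | cast i => simpa using hsp i
  | cast i' =>
    induction i using Fin.lastCases with
    | last => exact fun h => absurd h (Fin.le_last _).not_gt
    | cast i => simpa using hs.blockLt i i'

theorem exists_isBlockSeq_span_subset_approx (hcof : IsCofiniteUF k U) (hsub : IsSubsymmetric U)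
    (hidem : IsTetrisIdempotent U) (hA : A ∈ U) :
    ∃ P, IsBlockSeq k P ∧ ∀ q, InSpanPM k P q → q ∈ approx 1 A := by
  obtain ⟨P, hP⟩ := exists_seq_of_forall_exists_snoc (P := IsGoodPrefix k U A)
    (isGoodPrefix_elim0 hA) fun n s hs => (hs.eventually_snoc hcof hsub hidem).exists
  have hfin (n) : IsFin k (P n) := (hP (n + 1)).isFin (Fin.last n)
  refine ⟨P, ⟨hfin, fun m n hmn => ?_⟩, fun q hq => ?_⟩
  · exact (hP (n + 1)).blockLt ⟨m, hmn.trans n.lt_succ_self⟩ (Fin.last n) hmn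
  · obtain ⟨N, ε, j, hj, rfl⟩ := exists_eq_signedSum_of_inSpanPM hfin hq
    obtain ⟨q', hq', hnorm⟩ := (hP N).signedSum_mem ε j
    rw [hj] at hq'
    exact ⟨q', extendable_zero_subset hcof hq', hnorm⟩

end BlockSequence

/-- Gowers' `FIN_{±k}` theorem: for every `k, r ≥ 1` and every colouring
`c : FIN_{±k} → r` there are `i < r` and an infinite block sequence `P` with
`⟨P⟩_{±k} ⊆ (c⁻¹{i})₁`. -/
theorem gowers_fin_pm_k (k r : ℕ) (hk : 1 ≤ k) (hr : 1 ≤ r) (c : (ℕ → ℤ) → Fin r) :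
    ∃ (i : Fin r) (P : ℕ → ℕ → ℤ), IsBlockSeq k P ∧
      ∀ q : ℕ → ℤ, InSpanPM k P q →
        ∃ q' : ℕ → ℤ, IsFin k q' ∧ c q' = i ∧ normLe (q - q') 1 := by
  obtain ⟨U, hcof, hsub, hidem⟩ := exists_isTetrisIdempotent k
  obtain ⟨i, hi⟩ := Ultrafilter.eq_pure_of_finite (U.map c)
  have hcolour : {p | IsFin k p ∧ c p = i} ∈ U :=
    inter_mem hcof.1 (show {i} ∈ U.map c from hi ▸ mem_pure.2 rfl)
  obtain ⟨P, hP, hspan⟩ := exists_isBlockSeq_span_subset_approx hcof hsub hidem hcolour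
  refine ⟨i, P, hP, fun q hq => ?_⟩
  obtain ⟨q', ⟨hfin, hc⟩, hnorm⟩ := hspan q hq
  exact ⟨q', hfin, hc, hnorm⟩
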